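/- Let n ≥ 2, 1 < p < ∞ and 1 < 𝔭 < n. Fix pairwise distinct unit vectors ξ₁, …, ξ_m ∈ S^{n-1} that are not contained in any closed hemisphere, and positive numbers c₁, …, c_m. If ỹ ∈ [0,∞)^m satisfies ((𝔭−1)/(n−𝔭))·Σ_{i=1}^m c_i ỹ_i^p = 1 and C_𝔭(P(ỹ)) ≥ C_𝔭(P(y)) for every y ∈ [0,∞)^m with ((𝔭−1)/(n−𝔭))·Σ_{i=1}^m c_i y_i^p = 1, then the origin is an interior point of P(ỹ). -/

import Mathlib

open MeasureTheory Metric Set Filter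
open scoped RealInnerProductSpace Pointwise

/-- The electrostatic `𝔭`-capacity of a set `E ⊆ ℝⁿ`:
`C_𝔭(E) = inf { ∫ |∇u|^𝔭 : u ∈ C_c^∞(ℝⁿ), u ≥ 1 on E }`. -/
noncomputable def pCap (n : ℕ) (𝔭 : ℝ) (E : Set (EuclideanSpace ℝ (Fin n))) : ℝ :=
  sInf { c : ℝ | ∃ u : EuclideanSpace ℝ (Fin n) → ℝ,
    ContDiff ℝ (⊤ : ℕ∞) u ∧ HasCompactSupport u ∧ (∀ x ∈ E, 1 ≤ u x) ∧
    c = ∫ x, ‖fderiv ℝ u x‖ ^ 𝔭 }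

/-- The Aleksandrov body (Wulff shape) of a function, via its values on unit vectors. -/
def wulff {n : ℕ} (f : EuclideanSpace ℝ (Fin n) → ℝ) : Set (EuclideanSpace ℝ (Fin n)) :=
  { x | ∀ ξ : EuclideanSpace ℝ (Fin n), ‖ξ‖ = 1 → ⟪x, ξ⟫ ≤ f ξ }

/-- The support function `h_K(x) = sup { ⟪x, y⟫ : y ∈ K }`. -/
noncomputable def suppFn {n : ℕ} (K : Set (EuclideanSpace ℝ (Fin n)))
    (x : EuclideanSpace ℝ (Fin n)) : ℝ :=
  sSup ((fun y => ⟪x, y⟫) '' K)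

/-- Two sets are dilates if one is a positive scalar multiple of the other. -/
def AreDilates {n : ℕ} (A B : Set (EuclideanSpace ℝ (Fin n))) : Prop :=
  ∃ c : ℝ, 0 < c ∧ A = c • B

/-- A convex body: a compact convex set with nonempty interior. -/
def IsConvexBody {n : ℕ} (K : Set (EuclideanSpace ℝ (Fin n))) : Prop :=
  IsCompact K ∧ Convex ℝ K ∧ (interior K).Nonempty

/-- The `L_p` sum of two convex bodies, defined as the Wulff shape of
`(h_K^p + h_L^p)^{1/p}`. -/
noncomputable def lpSum {n : ℕ} (p : ℝ) (K L : Set (EuclideanSpace ℝ (Fin n))) :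
    Set (EuclideanSpace ℝ (Fin n)) :=
  wulff (fun ξ => (suppFn K ξ ^ p + suppFn L ξ ^ p) ^ (1 / p))

/-- The polytope `P(y) = ⋂ᵢ { x : ⟪x, ξᵢ⟫ ≤ yᵢ }`. -/
def polyP {n m : ℕ} (ξ : Fin m → EuclideanSpace ℝ (Fin n)) (y : Fin m → ℝ) :
    Set (EuclideanSpace ℝ (Fin n)) :=
  ⋂ i, { x | ⟪x, ξ i⟫ ≤ y i }


section helpers

/-- Admissible functions. -/
def Adm8 {n : ℕ} (E : Set (EuclideanSpace ℝ (Fin n))) (u : EuclideanSpace ℝ (Fin n) → ℝ) : Prop :=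
  ContDiff ℝ (⊤ : ℕ∞) u ∧ HasCompactSupport u ∧ (∀ x ∈ E, 1 ≤ u x)

lemma pCap_le8 {n : ℕ} {𝔭 : ℝ} {E : Set (EuclideanSpace ℝ (Fin n))}
    {u : EuclideanSpace ℝ (Fin n) → ℝ} (hu : Adm8 E u) :
    pCap n 𝔭 E ≤ ∫ x, ‖fderiv ℝ u x‖ ^ 𝔭 := by
  apply csInf_le
  · refine ⟨0, ?_⟩
    rintro c ⟨u, -, -, -, rfl⟩
    positivity
  · exact ⟨u, hu.1, hu.2.1, hu.2.2, rfl⟩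

lemma exists_adm8 {n : ℕ} {E : Set (EuclideanSpace ℝ (Fin n))} (hE : Bornology.IsBounded E) :
    ∃ u, Adm8 E u := by
  obtain ⟨R, hR⟩ := hE.subset_closedBall 0
  let f : ContDiffBump (0 : EuclideanSpace ℝ (Fin n)) :=
    ⟨|R| + 1, |R| + 2, by positivity, by linarith⟩
  refine ⟨f, f.contDiff, f.hasCompactSupport, fun x hx => ?_⟩
  rw [f.one_of_mem_closedBall]
  have := hR hx
  simp only [mem_closedBall] at this ⊢
  exact this.trans ((le_abs_self R).trans (by simp [f]))

lemma le_pCap8 {n : ℕ} {𝔭 : ℝ} {E : Set (EuclideanSpace ℝ (Fin n))} (hE : Bornology.IsBounded E)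
    {a : ℝ} (h : ∀ u, Adm8 E u → a ≤ ∫ x, ‖fderiv ℝ u x‖ ^ 𝔭) : a ≤ pCap n 𝔭 E := by
  apply le_csInf
  · obtain ⟨u, hu⟩ := exists_adm8 hE
    exact ⟨_, u, hu.1, hu.2.1, hu.2.2, rfl⟩
  · rintro c ⟨u, h1, h2, h3, rfl⟩
    exact h u ⟨h1, h2, h3⟩

lemma pCap_nonneg8 {n : ℕ} {𝔭 : ℝ} (E : Set (EuclideanSpace ℝ (Fin n))) : 0 ≤ pCap n 𝔭 E := by
  apply Real.sInf_nonneg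
  rintro c ⟨u, -, -, -, rfl⟩
  positivity

lemma pCap_mono8 {n : ℕ} {𝔭 : ℝ} {E F : Set (EuclideanSpace ℝ (Fin n))}
    (hF : Bornology.IsBounded F) (h : E ⊆ F) : pCap n 𝔭 E ≤ pCap n 𝔭 F :=
  le_pCap8 hF fun _ hu => pCap_le8 ⟨hu.1, hu.2.1, fun x hx => hu.2.2 x (h hx)⟩

lemma integrable8 {n : ℕ} {𝔭 : ℝ} (h𝔭 : 1 < 𝔭) {u : EuclideanSpace ℝ (Fin n) → ℝ}
    (h1 : ContDiff ℝ (⊤ : ℕ∞) u) (h2 : HasCompactSupport u) :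
    Integrable (fun x => ‖fderiv ℝ u x‖ ^ 𝔭) := by
  apply Continuous.integrable_of_hasCompactSupport
  · exact ((h1.continuous_fderiv (by simp)).norm).rpow_const fun x => Or.inr (by linarith)
  · exact (h2.fderiv ℝ).comp_left (g := fun L => ‖L‖ ^ 𝔭)
      (by simp [Real.zero_rpow (by linarith : 𝔭 ≠ 0)])

/-- Behaviour under similarities. -/
lemma pCap_map8 {n : ℕ} {𝔭 : ℝ} {E E' : Set (EuclideanSpace ℝ (Fin n))}
    (hE : Bornology.IsBounded E) (L : EuclideanSpace ℝ (Fin n) ≃ₗᵢ[ℝ] EuclideanSpace ℝ (Fin n))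
    (a : EuclideanSpace ℝ (Fin n)) (r : ℝ) (hr : 0 < r)
    (hT : ∀ x ∈ E', a + r • L x ∈ E) :
    pCap n 𝔭 E' ≤ r ^ (𝔭 - n) * pCap n 𝔭 E := by
  have hrp : 0 < r ^ (𝔭 - n) := Real.rpow_pos_of_pos hr _
  rw [← div_le_iff₀' hrp]
  apply le_pCap8 hE
  intro u hu
  rw [div_le_iff₀' hrp]
  have hcomp : HasCompactSupport (fun x => u (a + r • L x)) := by
    have := ((hu.2.1.comp_homeomorph (Homeomorph.addLeft a)).comp_homeomorph
      (Homeomorph.smulOfNeZero r hr.ne')).comp_homeomorph L.toHomeomorph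
    exact this
  have hadm : Adm8 E' (fun x => u (a + r • L x)) := by
    refine ⟨?_, hcomp, fun x hx => hu.2.2 _ (hT x hx)⟩
    have h2 : ContDiff ℝ (⊤ : ℕ∞) (fun x => a + r • L x) :=
      contDiff_const.add (L.contDiff.const_smul r)
    exact hu.1.comp h2
  refine (pCap_le8 hadm).trans_eq ?_
  have hfd : ∀ x, ‖fderiv ℝ (fun x => u (a + r • L x)) x‖ = r * ‖fderiv ℝ u (a + r • L x)‖ := by
    intro x
    have h1 : HasFDerivAt u (fderiv ℝ u (a + r • L x)) (a + r • L x) :=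
      (hu.1.differentiable (by simp) _).hasFDerivAt
    have h2 : HasFDerivAt (fun x => a + r • L x)
        (r • (L.toContinuousLinearEquiv : EuclideanSpace ℝ (Fin n) →L[ℝ] _)) x :=
      ((L.toContinuousLinearEquiv.hasFDerivAt).const_smul r).const_add a
    have h3 := h1.comp x h2
    have h4 : fderiv ℝ (fun x => u (a + r • L x)) x = _ := h3.fderiv
    rw [h4, ContinuousLinearMap.comp_smul, norm_smul, Real.norm_of_nonneg hr.le]
    congr 1
    exact ContinuousLinearMap.opNorm_comp_linearIsometryEquiv _ L
  simp_rw [hfd, Real.mul_rpow hr.le (norm_nonneg _)]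
  rw [integral_const_mul]
  have e1 := L.measurePreserving.integral_comp L.toHomeomorph.measurableEmbedding
    (fun y => ‖fderiv ℝ u (a + r • y)‖ ^ 𝔭)
  have e2 := Measure.integral_comp_smul (volume : Measure (EuclideanSpace ℝ (Fin n)))
    (fun y => ‖fderiv ℝ u (a + y)‖ ^ 𝔭) r
  have e3 := integral_add_left_eq_self (μ := (volume : Measure (EuclideanSpace ℝ (Fin n))))
    (fun y => ‖fderiv ℝ u y‖ ^ 𝔭) a
  rw [e1, e2, e3, smul_eq_mul, ← mul_assoc]
  congr 1
  rw [finrank_euclideanSpace_fin, abs_of_pos (by positivity), Real.rpow_sub hr, Real.rpow_natCast]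
  rfl

lemma conv8 {V : Type*} [NormedAddCommGroup V] [NormedSpace ℝ V] {𝔭 : ℝ} (h𝔭 : 1 < 𝔭) (a b : V)
    {s t : ℝ} (hs : 0 ≤ s) (ht : 0 ≤ t) (hst : s + t = 1) :
    ‖s • a + t • b‖ ^ 𝔭 ≤ s * ‖a‖ ^ 𝔭 + t * ‖b‖ ^ 𝔭 := by
  have h1 : ‖s • a + t • b‖ ≤ s * ‖a‖ + t * ‖b‖ := by
    refine (norm_add_le _ _).trans_eq ?_
    rw [norm_smul, norm_smul, Real.norm_of_nonneg hs, Real.norm_of_nonneg ht]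
  refine (Real.rpow_le_rpow (norm_nonneg _) h1 (by linarith)).trans ?_
  exact (convexOn_rpow h𝔭.le).2 (norm_nonneg a) (norm_nonneg b) hs ht hst

/-- Smoothed absolute value. -/
lemma sqrt_deriv8 {ε : ℝ} (hε : 0 < ε) (t : ℝ) :
    HasDerivAt (fun t : ℝ => (√(t ^ 2 + ε ^ 2) - ε) / 2) (t / √(t ^ 2 + ε ^ 2) / 2) t := by
  have hpos : 0 < t ^ 2 + ε ^ 2 := by positivity
  have h1 : HasDerivAt (fun t : ℝ => t ^ 2 + ε ^ 2) (2 * t) t := by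
    simpa using (hasDerivAt_pow 2 t).add_const (ε ^ 2)
  have h2 := ((h1.sqrt hpos.ne').sub_const ε).div_const 2
  rw [mul_div_mul_left _ _ (two_ne_zero)] at h2
  exact h2

lemma sqrt_contDiff8 {ε : ℝ} (hε : 0 < ε) :
    ContDiff ℝ (⊤ : ℕ∞) (fun t : ℝ => (√(t ^ 2 + ε ^ 2) - ε) / 2) := by
  apply ContDiff.div_const
  apply ContDiff.sub _ contDiff_const
  apply ContDiff.sqrt
  · exact (contDiff_id.pow 2).add contDiff_const
  · intro x; positivity

lemma submod_aux8 {n : ℕ} {𝔭 : ℝ} (h𝔭 : 1 < 𝔭) {A B : Set (EuclideanSpace ℝ (Fin n))}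
    {u v : EuclideanSpace ℝ (Fin n) → ℝ} (hu : Adm8 A u) (hv : Adm8 B v)
    {ε : ℝ} (hε : 0 < ε) (hε1 : ε < 1) :
    (1 - ε) ^ 𝔭 * pCap n 𝔭 (A ∪ B) + pCap n 𝔭 (A ∩ B) ≤
      (∫ x, ‖fderiv ℝ u x‖ ^ 𝔭) + ∫ x, ‖fderiv ℝ v x‖ ^ 𝔭 := by
  set ψ : ℝ → ℝ := fun t : ℝ => (√(t ^ 2 + ε ^ 2) - ε) / 2 with hψ
  set θ : ℝ → ℝ := fun t : ℝ => t / √(t ^ 2 + ε ^ 2) with hθ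
  have hψ0 : ψ 0 = 0 := by simp [hψ, Real.sqrt_sq hε.le]
  have hψlow : ∀ t, |t| / 2 - ε / 2 ≤ ψ t := by
    intro t
    have : |t| ≤ √(t ^ 2 + ε ^ 2) := Real.abs_le_sqrt (by nlinarith)
    simp only [hψ]; linarith
  have hψup : ∀ t, ψ t ≤ |t| / 2 := by
    intro t
    have : √(t ^ 2 + ε ^ 2) ≤ |t| + ε := by
      rw [Real.sqrt_le_left (by positivity)]
      have := abs_nonneg t
      nlinarith [sq_abs t]
    simp only [hψ]; linarith
  have hθ1 : ∀ t, |θ t| ≤ 1 := by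
    intro t
    have h1 : |t| ≤ √(t ^ 2 + ε ^ 2) := Real.abs_le_sqrt (by nlinarith)
    simp only [hθ]
    rw [abs_div, abs_of_nonneg (Real.sqrt_nonneg _)]
    exact div_le_one_of_le₀ h1 (Real.sqrt_nonneg _)
  set M : EuclideanSpace ℝ (Fin n) → ℝ := fun x => (u x + v x) / 2 + ψ (u x - v x) with hM
  set m : EuclideanSpace ℝ (Fin n) → ℝ := fun x => (u x + v x) / 2 - ψ (u x - v x) with hm
  have hψc : ContDiff ℝ (⊤ : ℕ∞) (fun x => ψ (u x - v x)) :=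
    (sqrt_contDiff8 hε).comp (hu.1.sub hv.1)
  have hMc : ContDiff ℝ (⊤ : ℕ∞) M := ((hu.1.add hv.1).div_const 2).add hψc
  have hmc : ContDiff ℝ (⊤ : ℕ∞) m := ((hu.1.add hv.1).div_const 2).sub hψc
  have hMs : HasCompactSupport M := by
    apply (hu.2.1.union hv.2.1).of_isClosed_subset (isClosed_tsupport _)
    apply closure_minimal _ ((isClosed_tsupport _).union (isClosed_tsupport _))
    intro x hx
    by_contra hc
    simp only [mem_union, not_or] at hc
    apply hx
    simp [hM, image_eq_zero_of_notMem_tsupport hc.1, image_eq_zero_of_notMem_tsupport hc.2, hψ0]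
  have hms : HasCompactSupport m := by
    apply (hu.2.1.union hv.2.1).of_isClosed_subset (isClosed_tsupport _)
    apply closure_minimal _ ((isClosed_tsupport _).union (isClosed_tsupport _))
    intro x hx
    by_contra hc
    simp only [mem_union, not_or] at hc
    apply hx
    simp [hm, image_eq_zero_of_notMem_tsupport hc.1, image_eq_zero_of_notMem_tsupport hc.2, hψ0]
  have hadm : Adm8 (A ∩ B) m := by
    refine ⟨hmc, hms, fun x hx => ?_⟩
    have h1 := hu.2.2 x hx.1
    have h2 := hv.2.2 x hx.2
    have h3 := hψup (u x - v x)
    simp only [hm]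
    rcases abs_cases (u x - v x) with h | h <;> linarith
  have hadM : Adm8 (A ∪ B) (fun x => (1 - ε)⁻¹ • M x) := by
    refine ⟨hMc.const_smul _, hMs.smul_left (f := fun _ => (1 - ε)⁻¹), fun x hx => ?_⟩
    have h3 := hψlow (u x - v x)
    show 1 ≤ (1 - ε)⁻¹ * M x
    rw [← div_eq_inv_mul, le_div_iff₀ (by linarith)]
    simp only [hM]
    rcases hx with hx | hx
    · have h1 := hu.2.2 x hx
      have := le_abs_self (u x - v x)
      linarith
    · have h1 := hv.2.2 x hx
      have := neg_le_abs (u x - v x)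
      linarith
  have key : ∀ x, ‖fderiv ℝ M x‖ ^ 𝔭 + ‖fderiv ℝ m x‖ ^ 𝔭 ≤
      ‖fderiv ℝ u x‖ ^ 𝔭 + ‖fderiv ℝ v x‖ ^ 𝔭 := by
    intro x
    have h1 : HasFDerivAt u (fderiv ℝ u x) x := (hu.1.differentiable (by simp) _).hasFDerivAt
    have h2 : HasFDerivAt v (fderiv ℝ v x) x := (hv.1.differentiable (by simp) _).hasFDerivAt
    have h3 : HasFDerivAt (fun x => ψ (u x - v x)) ((θ (u x - v x) / 2) • (fderiv ℝ u x - fderiv ℝ v x)) x :=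
      HasDerivAt.comp_hasFDerivAt (f := fun x => u x - v x) x
        (sqrt_deriv8 hε (u x - v x)) (h1.sub h2)
    have h4 : HasFDerivAt (fun x => (u x + v x) / 2) ((2 : ℝ)⁻¹ • (fderiv ℝ u x + fderiv ℝ v x)) x := by
      have := (h1.add h2).const_smul (2 : ℝ)⁻¹
      refine this.congr_of_eventuallyEq (Eventually.of_forall fun y => ?_)
      simp [div_eq_inv_mul]
    have hh := abs_le.1 (hθ1 (u x - v x))
    have e1 : fderiv ℝ M x = ((1 + θ (u x - v x)) / 2) • fderiv ℝ u x +
        ((1 - θ (u x - v x)) / 2) • fderiv ℝ v x := by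
      rw [show fderiv ℝ M x = _ from (h4.add h3).fderiv]; module
    have e2 : fderiv ℝ m x = ((1 - θ (u x - v x)) / 2) • fderiv ℝ u x +
        ((1 + θ (u x - v x)) / 2) • fderiv ℝ v x := by
      rw [show fderiv ℝ m x = _ from (h4.sub h3).fderiv]; module
    rw [e1, e2]
    have k1 := conv8 h𝔭 (fderiv ℝ u x) (fderiv ℝ v x) (s := (1 + θ (u x - v x)) / 2)
      (t := (1 - θ (u x - v x)) / 2) (by linarith) (by linarith) (by ring)
    have k2 := conv8 h𝔭 (fderiv ℝ u x) (fderiv ℝ v x) (s := (1 - θ (u x - v x)) / 2)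
      (t := (1 + θ (u x - v x)) / 2) (by linarith) (by linarith) (by ring)
    linarith
  have hrelint : (∫ x, ‖fderiv ℝ M x‖ ^ 𝔭) + (∫ x, ‖fderiv ℝ m x‖ ^ 𝔭) ≤
      (∫ x, ‖fderiv ℝ u x‖ ^ 𝔭) + ∫ x, ‖fderiv ℝ v x‖ ^ 𝔭 := by
    rw [← integral_add (integrable8 h𝔭 hMc hMs) (integrable8 h𝔭 hmc hms),
      ← integral_add (integrable8 h𝔭 hu.1 hu.2.1) (integrable8 h𝔭 hv.1 hv.2.1)]
    exact integral_mono ((integrable8 h𝔭 hMc hMs).add (integrable8 h𝔭 hmc hms))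
      ((integrable8 h𝔭 hu.1 hu.2.1).add (integrable8 h𝔭 hv.1 hv.2.1)) key
  refine le_trans (add_le_add ?_ (pCap_le8 hadm)) hrelint
  have h5 := pCap_le8 (𝔭 := 𝔭) hadM
  have h6 : ∀ x, ‖fderiv ℝ (fun x => (1 - ε)⁻¹ • M x) x‖ ^ 𝔭 = ((1 - ε) ^ 𝔭)⁻¹ * ‖fderiv ℝ M x‖ ^ 𝔭 := by
    intro x
    have : fderiv ℝ (fun x => (1 - ε)⁻¹ • M x) x = (1 - ε)⁻¹ • fderiv ℝ M x :=
      ((hMc.differentiable (by simp) x).hasFDerivAt.const_smul (1 - ε)⁻¹).fderiv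
    have hp : 0 < 1 - ε := by linarith
    rw [this, norm_smul, Real.norm_of_nonneg (by positivity), Real.mul_rpow (by positivity) (by positivity),
      Real.inv_rpow hp.le]
  simp_rw [h6] at h5
  rw [integral_const_mul] at h5
  have hp : 0 < (1 - ε) ^ 𝔭 := Real.rpow_pos_of_pos (by linarith) _
  rwa [← div_eq_inv_mul, le_div_iff₀' hp] at h5

/-- Strong subadditivity. -/
lemma pCap_submod8 {n : ℕ} {𝔭 : ℝ} (h𝔭 : 1 < 𝔭) {A B : Set (EuclideanSpace ℝ (Fin n))}
    (hA : Bornology.IsBounded A) (hB : Bornology.IsBounded B) :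
    pCap n 𝔭 (A ∪ B) + pCap n 𝔭 (A ∩ B) ≤ pCap n 𝔭 A + pCap n 𝔭 B := by
  have main : ∀ u, Adm8 A u → ∀ v, Adm8 B v → pCap n 𝔭 (A ∪ B) + pCap n 𝔭 (A ∩ B) ≤
      (∫ x, ‖fderiv ℝ u x‖ ^ 𝔭) + ∫ x, ‖fderiv ℝ v x‖ ^ 𝔭 := by
    intro u hu v hv
    have hc : Continuous (fun ε : ℝ => (1 - ε) ^ 𝔭 * pCap n 𝔭 (A ∪ B) + pCap n 𝔭 (A ∩ B)) :=
      (((continuous_const.sub continuous_id).rpow_const fun x => Or.inr (by linarith)).mul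
        continuous_const).add continuous_const
    have ht : Tendsto (fun ε : ℝ => (1 - ε) ^ 𝔭 * pCap n 𝔭 (A ∪ B) + pCap n 𝔭 (A ∩ B))
        (nhdsWithin 0 (Ioi 0)) (nhds (pCap n 𝔭 (A ∪ B) + pCap n 𝔭 (A ∩ B))) := by
      have := (hc.tendsto 0).mono_left (nhdsWithin_le_nhds (s := Ioi 0))
      simpa using this
    refine le_of_tendsto ht ?_
    filter_upwards [Ioo_mem_nhdsGT (zero_lt_one' ℝ)] with ε hε
    exact submod_aux8 h𝔭 hu hv hε.1 hε.2
  have h1 : ∀ u, Adm8 A u → pCap n 𝔭 (A ∪ B) + pCap n 𝔭 (A ∩ B) - (∫ x, ‖fderiv ℝ u x‖ ^ 𝔭) ≤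
      pCap n 𝔭 B := fun u hu => le_pCap8 hB fun v hv => by linarith [main u hu v hv]
  have h2 : pCap n 𝔭 (A ∪ B) + pCap n 𝔭 (A ∩ B) - pCap n 𝔭 B ≤ pCap n 𝔭 A :=
    le_pCap8 hA fun u hu => by linarith [h1 u hu]
  linarith

/-- Positivity of the capacity of balls, from the Gagliardo-Nirenberg-Sobolev inequality. -/
lemma pCap_pos8 {n : ℕ} {𝔭 : ℝ} (h𝔭 : 1 < 𝔭) (hn : 𝔭 < n)
    {E : Set (EuclideanSpace ℝ (Fin n))} (hE : Bornology.IsBounded E)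
    (hE' : 0 < volume E) : 0 < pCap n 𝔭 E := by
  have hn0 : (0 : ℝ) < n := by linarith
  have hp'pos : 0 < 𝔭⁻¹ - (n : ℝ)⁻¹ := by
    have := inv_strictAnti₀ (by linarith : 0 < 𝔭) hn
    linarith
  let P : NNReal := ⟨𝔭, by linarith⟩
  let P' : NNReal := ⟨(𝔭⁻¹ - (n : ℝ)⁻¹)⁻¹, by positivity⟩
  have hP'0 : (P' : ENNReal) ≠ 0 := by
    have : 0 < P' := by
      rw [← NNReal.coe_pos]; exact inv_pos.2 hp'pos
    exact_mod_cast this.ne'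
  have hP0 : (P : ENNReal) ≠ 0 := by
    have : 0 < P := by
      rw [← NNReal.coe_pos]; show 0 < 𝔭; linarith
    exact_mod_cast this.ne'
  set C : NNReal := SNormLESNormFDerivOfEqConst ℝ (volume : Measure (EuclideanSpace ℝ (Fin n))) P with hC
  have hfin : volume E < ⊤ := hE.measure_lt_top
  have hvp : 0 < (volume E).toReal := ENNReal.toReal_pos hE'.ne' hfin.ne
  set w : ℝ := (volume E).toReal ^ ((P' : ℝ)⁻¹) with hw
  have hwpos : 0 < w := Real.rpow_pos_of_pos hvp _
  have hbd : ∀ u, Adm8 E u → w ≤ C * (∫ x, ‖fderiv ℝ u x‖ ^ 𝔭) ^ 𝔭⁻¹ := by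
    intro u hu
    have h1 := eLpNorm_le_eLpNorm_fderiv_of_eq (volume : Measure (EuclideanSpace ℝ (Fin n)))
      (hu.1.of_le (by exact_mod_cast le_top)) hu.2.1 (p := P) (p' := P') (by rw [← NNReal.coe_le_coe]; exact h𝔭.le)
      (by rw [finrank_euclideanSpace_fin]; exact_mod_cast hn0)
      (by rw [finrank_euclideanSpace_fin]; exact inv_inv _)
    have hcf : Continuous (fderiv ℝ u) := hu.1.continuous_fderiv (by simp)
    have hmem : MemLp (fderiv ℝ u) (P : ENNReal) (volume : Measure (EuclideanSpace ℝ (Fin n))) :=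
      hcf.memLp_of_hasCompactSupport (hu.2.1.fderiv ℝ)
    rw [hmem.eLpNorm_eq_integral_rpow_norm hP0 ENNReal.coe_ne_top] at h1
    have h2 := mul_meas_ge_le_pow_eLpNorm' (volume : Measure (EuclideanSpace ℝ (Fin n))) hP'0
      ENNReal.coe_ne_top (hu.1.continuous.aestronglyMeasurable) 1
    have h3 : volume E ≤ volume {x | 1 ≤ ‖u x‖ₑ} := by
      apply measure_mono
      intro x hx
      have := hu.2.2 x hx
      simp only [mem_ofPred_eq]
      rw [← ofReal_norm, ← ENNReal.ofReal_one]
      exact ENNReal.ofReal_le_ofReal (this.trans (Real.le_norm_self _))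
    rw [ENNReal.one_rpow, one_mul] at h2
    have h4 := ENNReal.rpow_le_rpow (h3.trans h2) (z := (P' : ℝ)⁻¹) (by positivity)
    rw [← ENNReal.rpow_mul, ENNReal.coe_toReal, mul_inv_cancel₀ (by exact_mod_cast hP'0), ENNReal.rpow_one] at h4
    have h5 := h4.trans h1
    have h6 := ENNReal.toReal_mono (by exact ENNReal.mul_ne_top ENNReal.coe_ne_top ENNReal.ofReal_ne_top) h5
    rw [← ENNReal.toReal_rpow, ENNReal.toReal_mul, ENNReal.coe_toReal, ENNReal.toReal_ofReal (by positivity)] at h6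
    exact h6
  have hCpos : 0 < (C : ℝ) := by
    obtain ⟨u, hu⟩ := exists_adm8 hE
    rcases (NNReal.coe_nonneg C).eq_or_lt with h | h
    · have := hbd u hu
      rw [← h] at this; linarith
    · exact h
  have hpos : 0 < (w / C) ^ 𝔭 := by positivity
  refine hpos.trans_le (le_pCap8 hE fun u hu => ?_)
  have h7 : w / C ≤ (∫ x, ‖fderiv ℝ u x‖ ^ 𝔭) ^ 𝔭⁻¹ := by
    rw [div_le_iff₀' hCpos]; exact hbd u hu
  have h8 := Real.rpow_le_rpow (by positivity) h7 (by linarith : 0 ≤ 𝔭)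
  rwa [← Real.rpow_mul (by positivity), inv_mul_cancel₀ (by linarith), Real.rpow_one] at h8

/-- The piece of the cone with apex `c` over `P` between the dilation factors `a` and `b`. -/
def cone8 {n : ℕ} (c : EuclideanSpace ℝ (Fin n)) (P : Set (EuclideanSpace ℝ (Fin n))) (a b : ℝ) :
    Set (EuclideanSpace ℝ (Fin n)) :=
  {x | ∃ τ, a ≤ τ ∧ τ ≤ b ∧ ∃ q ∈ P, x = c + τ • (q - c)}

lemma cone_bdd8 {n : ℕ} {c : EuclideanSpace ℝ (Fin n)} {P : Set (EuclideanSpace ℝ (Fin n))}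
    (hP : IsCompact P) (a b : ℝ) : Bornology.IsBounded (cone8 c P a b) := by
  have h : IsCompact ((fun z : ℝ × EuclideanSpace ℝ (Fin n) => c + z.1 • (z.2 - c)) ''
      (Icc a b ×ˢ P)) := (isCompact_Icc.prod hP).image (by fun_prop)
  refine h.isBounded.subset ?_
  rintro x ⟨τ, h1, h2, q, hq, rfl⟩
  exact ⟨(τ, q), ⟨⟨h1, h2⟩, hq⟩, rfl⟩

lemma pCap_hom8 {n : ℕ} {𝔭 : ℝ} {E E' : Set (EuclideanSpace ℝ (Fin n))}
    (hE : Bornology.IsBounded E) (hE' : Bornology.IsBounded E')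
    (c : EuclideanSpace ℝ (Fin n)) {l : ℝ} (hl : 0 < l)
    (h1 : ∀ x ∈ E', c + l⁻¹ • (x - c) ∈ E) (h2 : ∀ x ∈ E, c + l • (x - c) ∈ E') :
    pCap n 𝔭 E' = l ^ ((n : ℝ) - 𝔭) * pCap n 𝔭 E := by
  have a1 := pCap_map8 (𝔭 := 𝔭) (E' := E') hE (LinearIsometryEquiv.refl ℝ _) (c - l⁻¹ • c) l⁻¹
    (inv_pos.2 hl) (by
      intro x hx
      convert h1 x hx using 1
      simp only [LinearIsometryEquiv.coe_refl, id]
      module)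
  have a2 := pCap_map8 (𝔭 := 𝔭) (E' := E) hE' (LinearIsometryEquiv.refl ℝ _) (c - l • c) l hl (by
      intro x hx
      convert h2 x hx using 1
      simp only [LinearIsometryEquiv.coe_refl, id]
      module)
  have hp : 0 < l ^ ((n : ℝ) - 𝔭) := Real.rpow_pos_of_pos hl _
  have e1 : l⁻¹ ^ (𝔭 - n) = l ^ ((n : ℝ) - 𝔭) := by
    rw [Real.inv_rpow hl.le, ← Real.rpow_neg hl.le, neg_sub]
  have e2 : l ^ (𝔭 - n) = (l ^ ((n : ℝ) - 𝔭))⁻¹ := by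
    rw [← Real.rpow_neg hl.le, neg_sub]
  rw [e1] at a1
  rw [e2, ← div_eq_inv_mul, le_div_iff₀' hp] at a2
  exact le_antisymm a1 a2

lemma cone_hom8 {n : ℕ} {𝔭 : ℝ} {c : EuclideanSpace ℝ (Fin n)} {P : Set (EuclideanSpace ℝ (Fin n))}
    (hP : IsCompact P) (a b : ℝ) {l : ℝ} (hl : 0 < l) :
    pCap n 𝔭 (cone8 c P (l * a) (l * b)) = l ^ ((n : ℝ) - 𝔭) * pCap n 𝔭 (cone8 c P a b) := by
  apply pCap_hom8 (cone_bdd8 hP _ _) (cone_bdd8 hP _ _) c hl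
  · rintro x ⟨τ, h1, h2, q, hq, rfl⟩
    refine ⟨l⁻¹ * τ, ?_, ?_, q, hq, ?_⟩
    · rwa [← div_eq_inv_mul, le_div_iff₀' hl]
    · rwa [← div_eq_inv_mul, div_le_iff₀' hl]
    · module
  · rintro x ⟨τ, h1, h2, q, hq, rfl⟩
    refine ⟨l * τ, by gcongr, by gcongr, q, hq, ?_⟩
    module

lemma cone_one8 {n : ℕ} (c : EuclideanSpace ℝ (Fin n)) (P : Set (EuclideanSpace ℝ (Fin n))) :
    cone8 c P 1 1 = P := by
  ext x
  constructor
  · rintro ⟨τ, h1, h2, q, hq, rfl⟩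
    have : τ = 1 := le_antisymm h2 h1
    subst this
    simpa using hq
  · intro hx
    exact ⟨1, le_rfl, le_rfl, x, hx, by simp⟩

lemma cone_log8 {n : ℕ} {𝔭 : ℝ} (h𝔭 : 1 < 𝔭) (hn : 𝔭 < n)
    {c : EuclideanSpace ℝ (Fin n)} {P : Set (EuclideanSpace ℝ (Fin n))}
    (hP : IsCompact P) {r : ℝ} (hr : 0 < r) (hr1 : r ≤ 1) (N : ℕ) :
    pCap n 𝔭 (cone8 c P (r ^ N) 1) ≤
      pCap n 𝔭 P + N * (pCap n 𝔭 (cone8 c P r 1) - pCap n 𝔭 P) := by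
  have hmono : pCap n 𝔭 P ≤ pCap n 𝔭 (cone8 c P r 1) := by
    apply pCap_mono8 (cone_bdd8 hP _ _)
    intro x hx
    exact ⟨1, hr1, le_rfl, x, hx, by simp⟩
  induction N with
  | zero => simp [cone_one8]
  | succ k ih =>
    have hk : 0 < r ^ k := pow_pos hr k
    have hk1 : r ^ k ≤ 1 := pow_le_one₀ hr.le hr1
    have hsub := pCap_submod8 h𝔭 (cone_bdd8 (c := c) hP (r ^ k * r) (r ^ k * 1))
      (cone_bdd8 (c := c) hP (r ^ k) 1)
    have hu : pCap n 𝔭 (cone8 c P (r ^ (k + 1)) 1) ≤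
        pCap n 𝔭 (cone8 c P (r ^ k * r) (r ^ k * 1) ∪ cone8 c P (r ^ k) 1) := by
      apply pCap_mono8 ((cone_bdd8 hP _ _).union (cone_bdd8 hP _ _))
      rintro x ⟨τ, h1, h2, q, hq, rfl⟩
      rcases le_total τ (r ^ k) with h | h
      · left
        exact ⟨τ, by rwa [← pow_succ], by simpa using h, q, hq, rfl⟩
      · right
        exact ⟨τ, h, h2, q, hq, rfl⟩
    have hi : pCap n 𝔭 (cone8 c P (r ^ k * 1) (r ^ k * 1)) ≤
        pCap n 𝔭 (cone8 c P (r ^ k * r) (r ^ k * 1) ∩ cone8 c P (r ^ k) 1) := by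
      apply pCap_mono8 ((cone_bdd8 hP _ _).subset inter_subset_left)
      rintro x ⟨τ, h1, h2, q, hq, rfl⟩
      refine ⟨⟨τ, le_trans (by gcongr) h1, h2, q, hq, rfl⟩, ⟨τ, by simpa using h1, ?_, q, hq, rfl⟩⟩
      rw [mul_one] at h2
      exact h2.trans hk1
    rw [cone_hom8 hP _ _ hk] at hsub hi
    rw [cone_one8] at hi
    have hf : (r ^ k) ^ ((n : ℝ) - 𝔭) ≤ 1 := Real.rpow_le_one hk.le hk1 (by linarith)
    have hfin := mul_le_mul_of_nonneg_right hf (sub_nonneg.2 hmono)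
    push_cast
    linarith

lemma union_free8 {n : ℕ} {𝔭 : ℝ} (h𝔭 : 1 < 𝔭) {ι : Type*} (t : Finset ι)
    (G Q : ι → Set (EuclideanSpace ℝ (Fin n))) {X : Set (EuclideanSpace ℝ (Fin n))}
    (hX : Bornology.IsBounded X) (hG : ∀ i ∈ t, Bornology.IsBounded (G i))
    (hQX : ∀ i ∈ t, Q i ⊆ X) (hQG : ∀ i ∈ t, Q i ⊆ G i)
    (h : ∀ i ∈ t, pCap n 𝔭 (G i) ≤ pCap n 𝔭 (Q i)) :
    Bornology.IsBounded (X ∪ ⋃ i ∈ t, G i) ∧ pCap n 𝔭 (X ∪ ⋃ i ∈ t, G i) ≤ pCap n 𝔭 X := by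
  classical
  induction t using Finset.induction_on with
  | empty => simpa using hX
  | insert a s ha ih =>
    obtain ⟨ih1, ih2⟩ := ih (fun i hi => hG i (Finset.mem_insert_of_mem hi))
      (fun i hi => hQX i (Finset.mem_insert_of_mem hi))
      (fun i hi => hQG i (Finset.mem_insert_of_mem hi))
      (fun i hi => h i (Finset.mem_insert_of_mem hi))
    have hGa := hG a (Finset.mem_insert_self _ _)
    have e : X ∪ ⋃ i ∈ insert a s, G i = G a ∪ (X ∪ ⋃ i ∈ s, G i) := by
      rw [Finset.set_biUnion_insert, union_left_comm]
    rw [e]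
    refine ⟨hGa.union ih1, ?_⟩
    have h1 := pCap_submod8 h𝔭 hGa ih1
    have h2 : pCap n 𝔭 (Q a) ≤ pCap n 𝔭 (G a ∩ (X ∪ ⋃ i ∈ s, G i)) := by
      apply pCap_mono8 (hGa.subset inter_subset_left)
      exact subset_inter (hQG a (Finset.mem_insert_self _ _))
        ((hQX a (Finset.mem_insert_self _ _)).trans subset_union_left)
    have h3 := h a (Finset.mem_insert_self _ _)
    linarith

/-- A ball containing `P` but not `c`, with center on the line joining `c` to its projection. -/
lemma ball8 {n : ℕ} {c : EuclideanSpace ℝ (Fin n)} {P : Set (EuclideanSpace ℝ (Fin n))}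
    (hP : IsCompact P) (hconv : Convex ℝ P) (hne : P.Nonempty) (hc : c ∉ P) :
    ∃ q ∈ P, ∃ t R : ℝ, 0 ≤ R ∧ R < ‖c - (q - t • (c - q))‖ ∧
      ∀ p ∈ P, ‖p - (q - t • (c - q))‖ ≤ R := by
  obtain ⟨q, hq, hmin⟩ := exists_norm_eq_iInf_of_complete_convex hne hP.isComplete hconv c
  rw [norm_eq_iInf_iff_real_inner_le_zero hconv hq] at hmin
  set d := c - q with hd
  have hd0 : 0 < ‖d‖ := by
    rw [norm_pos_iff, hd, sub_ne_zero]
    rintro rfl; exact hc hq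
  obtain ⟨M, hM⟩ := hP.isBounded.subset_closedBall q
  have hM0 : 0 ≤ M := by
    have := hM hq
    simpa using this
  set t := M ^ 2 / ‖d‖ ^ 2 with ht
  have ht0 : 0 ≤ t := by positivity
  have htd : t * ‖d‖ ^ 2 = M ^ 2 := by rw [ht]; field_simp
  refine ⟨q, hq, t, √(M ^ 2 + t ^ 2 * ‖d‖ ^ 2), Real.sqrt_nonneg _, ?_, ?_⟩
  · rw [Real.sqrt_lt' ?_]
    · have e : c - (q - t • d) = (1 + t) • d := by rw [hd]; module
      rw [e, norm_smul, Real.norm_of_nonneg (by positivity)]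
      nlinarith [pow_pos hd0 2]
    · have e : c - (q - t • d) = (1 + t) • d := by rw [hd]; module
      rw [e, norm_smul, Real.norm_of_nonneg (by positivity)]
      positivity
  · intro p hp
    apply Real.le_sqrt_of_sq_le
    have e : p - (q - t • d) = (p - q) + t • d := by module
    have h1 := hmin p hp
    have h2 : ‖p - q‖ ≤ M := by simpa [dist_eq_norm] using hM hp
    rw [e, norm_add_sq_real, norm_smul, inner_smul_right, real_inner_comm, mul_pow,
      Real.norm_eq_abs, sq_abs]
    have h3 : ‖p - q‖ ^ 2 ≤ M ^ 2 := by gcongr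
    nlinarith [mul_nonneg ht0 (neg_nonneg.2 h1)]

/-- The point reflection isometry fixing `x0` and exchanging `z` and `x`. -/
lemma refl8 {n : ℕ} (z x x0 : EuclideanSpace ℝ (Fin n)) (h : ‖z - x0‖ = ‖x - x0‖) :
    ∃ L : EuclideanSpace ℝ (Fin n) ≃ₗᵢ[ℝ] EuclideanSpace ℝ (Fin n),
      (∀ v, L (L v) = v) ∧ L (x - x0) = z - x0 ∧ ∀ v, ∃ t : ℝ, L v = v + t • (z - x) := by
  have e : (z - x0) - (x - x0) = z - x := by abel
  obtain ⟨L, hinv, hLz, hform⟩ :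
      ∃ L : EuclideanSpace ℝ (Fin n) ≃ₗᵢ[ℝ] EuclideanSpace ℝ (Fin n),
      (∀ v, L (L v) = v) ∧ L (z - x0) = x - x0 ∧ ∀ v, ∃ t : ℝ, L v = v + t • (z - x) := by
    refine ⟨(ℝ ∙ ((z - x0) - (x - x0)))ᗮ.reflection,
      fun v => Submodule.reflection_reflection _ v, Submodule.reflection_sub h, ?_⟩
    intro v
    rw [Submodule.reflection_orthogonal_apply, Submodule.reflection_singleton_apply, e]
    refine ⟨-(2 * (⟪z - x, v⟫ / ‖z - x‖ ^ 2)), ?_⟩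
    simp only [RCLike.ofReal_real_eq_id, id]
    module
  exact ⟨L, hinv, by rw [← hLz, hinv], hform⟩

lemma cone_strict8 {n : ℕ} {𝔭 : ℝ} (h𝔭 : 1 < 𝔭) (hn : 𝔭 < n)
    {c : EuclideanSpace ℝ (Fin n)} {P : Set (EuclideanSpace ℝ (Fin n))}
    (hP : IsCompact P) (hconv : Convex ℝ P) (hpos : 0 < pCap n 𝔭 P) (hne : P.Nonempty)
    (hc : c ∉ P) : ∃ ε, 0 < ε ∧ ε < 1 ∧ pCap n 𝔭 P < pCap n 𝔭 (cone8 c P ε 1) := by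
  by_contra hcon
  push Not at hcon
  obtain ⟨q, hq, t, R, hR0, hRc, hRP⟩ := ball8 hP hconv hne hc
  set x0 := q - t • (c - q) with hx0
  set K := convexHull ℝ (insert c P) with hK
  set A := affineSpan ℝ K with hA
  have hKA : K ⊆ A := subset_affineSpan ℝ K
  have hcK : c ∈ K := subset_convexHull ℝ _ (mem_insert _ _)
  have hPK : P ⊆ K := fun p hp => subset_convexHull ℝ _ (mem_insert_of_mem _ hp)
  have hKmem : ∀ x ∈ K, ∃ τ : ℝ, 0 ≤ τ ∧ τ ≤ 1 ∧ ∃ p ∈ P, x = c + τ • (p - c) := by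
    intro x hx
    rw [hK, convexHull_insert hne, hconv.convexHull_eq, mem_convexJoin] at hx
    obtain ⟨a, ha, b, hb, hx⟩ := hx
    rw [mem_singleton_iff] at ha
    subst ha
    rw [segment_eq_image'] at hx
    obtain ⟨τ, hτ, rfl⟩ := hx
    exact ⟨τ, hτ.1, hτ.2, b, hb, rfl⟩
  have hKconv : Convex ℝ K := convex_convexHull ℝ _
  have hline : ∀ (r : ℝ) (a b d : EuclideanSpace ℝ (Fin n)), a ∈ A → b ∈ A → d ∈ A →
      r • (a - b) + d ∈ A := fun r a b d ha hb hd => A.smul_vsub_vadd_mem r ha hb hd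
  have hx0A : x0 ∈ A := by
    have := hline (-t) c q q (hKA hcK) (hKA (hPK hq)) (hKA (hPK hq))
    convert this using 1
    rw [hx0]; module
  -- interior points of `K` relative to `A`
  have hrelint : ∀ z0 δ0 w s, 0 < s → s ≤ 1 → w ∈ K →
      (∀ x ∈ A, ‖x - z0‖ < δ0 → x ∈ K) →
      ∀ x ∈ A, ‖x - (w + s • (z0 - w))‖ < s * δ0 → x ∈ K := by
    intro z0 δ0 w s hs hs1 hw h x hx hxz
    have hx' : s⁻¹ • (x - w) + w ∈ K := by
      apply h _ (hline _ _ _ _ hx (hKA hw) (hKA hw))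
      have e : s⁻¹ • (x - w) + w - z0 = s⁻¹ • (x - (w + s • (z0 - w))) := by
        rw [smul_sub, smul_sub, smul_add, smul_smul, inv_mul_cancel₀ hs.ne']
        module
      rw [e, norm_smul, Real.norm_of_nonneg (by positivity), ← div_eq_inv_mul, div_lt_iff₀' hs]
      exact hxz
    have := hKconv hw hx' (sub_nonneg.2 hs1) hs.le (by ring)
    convert this using 1
    rw [smul_add, smul_smul, mul_inv_cancel₀ hs.ne']
    module
  obtain ⟨z0, δ0, hδ0, hz0A, hz0c, hz0⟩ : ∃ z0 : EuclideanSpace ℝ (Fin n), ∃ δ0 > 0, z0 ∈ A ∧ z0 ≠ c ∧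
      ∀ x ∈ A, ‖x - z0‖ < δ0 → x ∈ K := by
    obtain ⟨z1, hz1⟩ := (Set.Nonempty.intrinsicInterior hKconv ⟨c, hcK⟩)
    rw [mem_intrinsicInterior] at hz1
    obtain ⟨y, hy, rfl⟩ := hz1
    rw [mem_interior_iff_mem_nhds, Metric.mem_nhds_iff] at hy
    obtain ⟨δ1, hδ1, hb⟩ := hy
    have h1 : ∀ x ∈ A, ‖x - y‖ < δ1 → x ∈ K := by
      intro x hx hxy
      have : (⟨x, hx⟩ : affineSpan ℝ K) ∈ ball y δ1 := by
        rw [mem_ball, Subtype.dist_eq, dist_eq_norm]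
        exact hxy
      exact hb this
    by_cases hyc : (y : EuclideanSpace ℝ (Fin n)) = c
    · refine ⟨q + (1 / 2 : ℝ) • (c - q), 1 / 2 * δ1, by positivity, ?_, ?_,
        hrelint c δ1 q (1 / 2) (by norm_num) (by norm_num) (hPK hq) (by rw [← hyc]; exact h1)⟩
      · have := hline (1 / 2) c q q (hKA hcK) (hKA (hPK hq)) (hKA (hPK hq))
        rwa [add_comm] at this
      intro h
      apply hc
      have : q = c := by
        have h2 : (1 / 2 : ℝ) • (q - c) = 0 := by
          have : q + (1 / 2 : ℝ) • (c - q) - c = 0 := by rw [h, sub_self]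
          rw [← this]; module
        have h3 := (smul_eq_zero.1 h2).resolve_left (by norm_num)
        exact sub_eq_zero.1 h3
      rwa [← this]
    · exact ⟨y, δ1, hδ1, y.2, hyc, h1⟩
  have hzc : 0 < ‖z0 - c‖ := by rwa [norm_pos_iff, sub_ne_zero]
  set s := min 1 ((‖c - x0‖ - R) / (2 * ‖z0 - c‖)) with hs
  have hs0 : 0 < s := lt_min one_pos (div_pos (by linarith) (by positivity))
  have hs1 : s ≤ 1 := min_le_left _ _
  set z := c + s • (z0 - c) with hz
  have hzA : z ∈ A := by
    have := hline s z0 c c hz0A (hKA hcK) (hKA hcK)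
    convert this using 1
    rw [hz]; abel
  have hzK := hrelint z0 δ0 c s hs0 hs1 hcK hz0
  set ρ := ‖z - x0‖ with hρ
  have hRρ : R < ρ := by
    have h1 : s * (2 * ‖z0 - c‖) ≤ ‖c - x0‖ - R := by
      rw [← le_div_iff₀ (by positivity)]; exact min_le_right _ _
    have h2 : ‖c - x0‖ ≤ ‖z - x0‖ + ‖s • (z0 - c)‖ := by
      have : c - x0 = (z - x0) - s • (z0 - c) := by rw [hz]; abel
      rw [this]; exact norm_sub_le _ _
    rw [norm_smul, Real.norm_of_nonneg hs0.le] at h2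
    have : 0 < s * ‖z0 - c‖ := by positivity
    linarith
  have hρ0 : 0 < ρ := by linarith
  have hzcn : ‖z - c‖ = s * ‖z0 - c‖ := by
    have : z - c = s • (z0 - c) := by rw [hz]; abel
    rw [this, norm_smul, Real.norm_of_nonneg hs0.le]
  set m := ‖z - c‖ / 2 with hm
  have hm0 : 0 < m := by rw [hm, hzcn]; positivity
  obtain ⟨M, hM0, hM⟩ := hP.isBounded.subset_closedBall_lt 0 c
  set ε := min (m / M) (1 / 2) with hε
  have hε0 : 0 < ε := lt_min (by positivity) (by norm_num)
  have hε1 : ε < 1 := lt_of_le_of_lt (min_le_right _ _) (by norm_num)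
  have hcap := hcon ε hε0 hε1
  set C := cone8 c P ε 1 with hC
  have hPC : P ⊆ C := fun x hx => ⟨1, hε1.le, le_rfl, x, hx, by simp⟩
  set δ := min (s * δ0) m with hδ
  have hδ00 : 0 < δ := lt_min (by positivity) hm0
  have hloc : ∀ x ∈ A, ‖x - z‖ < δ → x ∈ C := by
    intro x hx hxz
    obtain ⟨τ, hτ0, hτ1, b, hb, rfl⟩ := hKmem x (hzK x hx (hxz.trans_le (min_le_left _ _)))
    refine ⟨τ, ?_, hτ1, b, hb, rfl⟩
    refine (min_le_left _ _).trans ?_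
    rw [div_le_iff₀ hM0]
    have h1 : ‖b - c‖ ≤ M := by simpa [dist_eq_norm] using hM hb
    have h2 : ‖c + τ • (b - c) - z‖ < m := hxz.trans_le (min_le_right _ _)
    have h3 : ‖z - c‖ ≤ ‖τ • (b - c)‖ + ‖c + τ • (b - c) - z‖ := by
      have : z - c = τ • (b - c) - (c + τ • (b - c) - z) := by abel
      rw [this]; exact norm_sub_le _ _
    rw [norm_smul, Real.norm_of_nonneg hτ0] at h3
    have h4 : τ * ‖b - c‖ ≤ τ * M := by gcongr
    linarith
  have hAcl : IsClosed (A : Set (EuclideanSpace ℝ (Fin n))) := A.closed_of_finiteDimensional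
  set X := (A : Set (EuclideanSpace ℝ (Fin n))) ∩ closedBall x0 ρ with hX
  have hXb : Bornology.IsBounded X := isBounded_closedBall.subset inter_subset_right
  set Y := (A : Set (EuclideanSpace ℝ (Fin n))) ∩ closedBall x0 (ρ + δ / 2) with hY
  have hYb : Bornology.IsBounded Y := isBounded_closedBall.subset inter_subset_right
  set S := (A : Set (EuclideanSpace ℝ (Fin n))) ∩ sphere x0 ρ with hS
  have hSc : IsCompact S := (isCompact_sphere x0 ρ).inter_left hAcl
  have hrefl : ∀ x : EuclideanSpace ℝ (Fin n),
      ∃ L : EuclideanSpace ℝ (Fin n) ≃ₗᵢ[ℝ] EuclideanSpace ℝ (Fin n), x ∈ S →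
      (∀ v, L (L v) = v) ∧ L (x - x0) = z - x0 ∧ ∀ v, ∃ t : ℝ, L v = v + t • (z - x) := by
    intro x
    by_cases hx : x ∈ S
    · obtain ⟨L, hL⟩ := refl8 z x x0 (by
        have := hx.2
        rw [mem_sphere, dist_eq_norm] at this
        rw [this])
      exact ⟨L, fun _ => hL⟩
    · exact ⟨LinearIsometryEquiv.refl ℝ _, fun h => absurd h hx⟩
  choose L hL using hrefl
  obtain ⟨t, htS, hcov⟩ := hSc.elim_nhds_subcover (fun x => ball x (δ / 2))
    (fun x _ => ball_mem_nhds x (by positivity))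
  have hgA : ∀ x ∈ S, ∀ y ∈ A, x0 + L x (y - x0) ∈ A := by
    intro x hx y hy
    obtain ⟨r, hr⟩ := (hL x hx).2.2 (y - x0)
    have := hline r z x y hzA hx.1 hy
    convert this using 1
    rw [hr]; abel
  have hkey := union_free8 (𝔭 := 𝔭) h𝔭 t (fun x => {y | x0 + L x (y - x0) ∈ C})
    (fun x => {y | x0 + L x (y - x0) ∈ P}) hXb ?_ ?_ ?_ ?_
  · obtain ⟨hb, hle⟩ := hkey
    have hYle : pCap n 𝔭 Y ≤ pCap n 𝔭 X := by
      refine (pCap_mono8 hb ?_).trans hle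
      rintro y ⟨hyA, hy⟩
      rw [mem_closedBall, dist_eq_norm] at hy
      rcases le_or_gt ‖y - x0‖ ρ with h | h
      · left
        exact ⟨hyA, by rwa [mem_closedBall, dist_eq_norm]⟩
      · right
        have hy0 : 0 < ‖y - x0‖ := hρ0.trans h
        set x' := (ρ / ‖y - x0‖) • (y - x0) + x0 with hx'
        have hx'S : x' ∈ S := by
          refine ⟨hline _ _ _ _ hyA hx0A hx0A, ?_⟩
          rw [mem_sphere, dist_eq_norm, hx', add_sub_cancel_right, norm_smul,
            Real.norm_of_nonneg (by positivity)]
          field_simp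
        have hyx' : ‖y - x'‖ ≤ δ / 2 := by
          have e : y - x' = (1 - ρ / ‖y - x0‖) • (y - x0) := by rw [hx']; module
          have h1 : ρ / ‖y - x0‖ ≤ 1 := by rw [div_le_one hy0]; exact h.le
          rw [e, norm_smul, Real.norm_of_nonneg (by linarith), sub_mul, div_mul_cancel₀ _ hy0.ne']
          linarith
        have := hcov hx'S
        rw [mem_iUnion₂] at this
        obtain ⟨x, hxt, hxb⟩ := this
        rw [mem_ball, dist_eq_norm] at hxb
        rw [mem_iUnion₂]
        refine ⟨x, hxt, ?_⟩
        have hxS := htS x hxt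
        apply hloc _ (hgA x hxS y hyA)
        have e : x0 + L x (y - x0) - z = L x (y - x) := by
          have e1 : y - x = (y - x0) - (x - x0) := by abel
          rw [e1, map_sub (L x) (y - x0) (x - x0), (hL x hxS).2.1]
          generalize L x (y - x0) = w
          abel
        rw [e, LinearIsometryEquiv.norm_map]
        have e2 : y - x = (y - x') + (x' - x) := by abel
        rw [e2]
        exact (norm_add_le _ _).trans_lt (by linarith)
    have hl1 : 1 < (ρ + δ / 2) / ρ := by rw [one_lt_div hρ0]; linarith
    have hl0 : 0 < (ρ + δ / 2) / ρ := by linarith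
    have hYX := pCap_hom8 (𝔭 := 𝔭) hXb hYb x0 hl0 (by
      rintro x ⟨hxA, hx⟩
      rw [mem_closedBall, dist_eq_norm] at hx
      refine ⟨?_, ?_⟩
      · have := hline ((ρ + δ / 2) / ρ)⁻¹ x x0 x0 hxA hx0A hx0A
        rwa [add_comm] at this
      · rw [mem_closedBall, dist_eq_norm, add_sub_cancel_left, norm_smul,
          Real.norm_of_nonneg (by positivity), inv_div]
        rw [div_mul_eq_mul_div, div_le_iff₀ (by positivity)]
        gcongr) (by
      rintro x ⟨hxA, hx⟩
      rw [mem_closedBall, dist_eq_norm] at hx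
      refine ⟨?_, ?_⟩
      · have := hline ((ρ + δ / 2) / ρ) x x0 x0 hxA hx0A hx0A
        rwa [add_comm] at this
      · rw [mem_closedBall, dist_eq_norm, add_sub_cancel_left, norm_smul,
          Real.norm_of_nonneg (by positivity)]
        rw [div_mul_eq_mul_div, div_le_iff₀ (by positivity)]
        gcongr)
    have hPX : pCap n 𝔭 P ≤ pCap n 𝔭 X := by
      apply pCap_mono8 hXb
      intro p hp
      refine ⟨hKA (hPK hp), ?_⟩
      rw [mem_closedBall, dist_eq_norm]
      exact (hRP p hp).trans hRρ.le
    have hl2 : 1 < ((ρ + δ / 2) / ρ) ^ ((n : ℝ) - 𝔭) := Real.one_lt_rpow hl1 (by linarith)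
    have hXpos : 0 < pCap n 𝔭 X := hpos.trans_le hPX
    nlinarith
  · intro x hx
    have hCb : Bornology.IsBounded C := cone_bdd8 hP _ _
    obtain ⟨B, hB⟩ := hCb.subset_closedBall x0
    refine (isBounded_closedBall (x := x0) (r := B)).subset ?_
    intro y hy
    have := hB hy
    rw [mem_closedBall, dist_eq_norm, add_sub_cancel_left, LinearIsometryEquiv.norm_map] at this
    rwa [mem_closedBall, dist_eq_norm]
  · intro x hx y hy
    have hxS := htS x hx
    have hy' : x0 + L x (y - x0) ∈ P := hy
    have h1 := hgA x hxS _ (hKA (hPK hy'))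
    have h2 := hRP _ hy'
    rw [add_sub_cancel_left, (hL x hxS).1, add_sub_cancel] at h1
    rw [add_sub_cancel_left, LinearIsometryEquiv.norm_map] at h2
    refine ⟨h1, ?_⟩
    rw [mem_closedBall, dist_eq_norm]
    exact h2.trans hRρ.le
  · intro x hx y hy
    exact hPC hy
  · intro x hx
    have hxS := htS x hx
    have hPb := hP.isBounded
    have hCb : Bornology.IsBounded C := cone_bdd8 hP _ _
    have hQb : Bornology.IsBounded {y | x0 + L x (y - x0) ∈ P} := by
      obtain ⟨B, hB⟩ := hPb.subset_closedBall x0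
      refine (isBounded_closedBall (x := x0) (r := B)).subset ?_
      intro y hy
      have := hB hy
      rw [mem_closedBall, dist_eq_norm, add_sub_cancel_left, LinearIsometryEquiv.norm_map] at this
      rwa [mem_closedBall, dist_eq_norm]
    have e : ∀ y, x0 - L x x0 + (1 : ℝ) • L x y = x0 + L x (y - x0) := by
      intro y
      rw [map_sub (L x) y x0, one_smul, sub_add_eq_add_sub, add_sub_assoc]
    have a1 := pCap_map8 (𝔭 := 𝔭) (E' := {y | x0 + L x (y - x0) ∈ C}) hCb (L x) (x0 - L x x0) 1
      one_pos (by
        intro y hy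
        rw [e]; exact hy)
    have a2 := pCap_map8 (𝔭 := 𝔭) (E' := P) hQb (L x) (x0 - L x x0) 1
      one_pos (by
        intro y hy
        rw [e]
        change x0 + L x (x0 + L x (y - x0) - x0) ∈ P
        rw [add_sub_cancel_left, (hL x hxS).1, add_sub_cancel]
        exact hy)
    rw [Real.one_rpow, one_mul] at a1 a2
    exact a1.trans (hcap.trans a2)

lemma mem_polyP8 {n m : ℕ} {ξ : Fin m → EuclideanSpace ℝ (Fin n)} {y : Fin m → ℝ}
    {x : EuclideanSpace ℝ (Fin n)} : x ∈ polyP ξ y ↔ ∀ i, ⟪x, ξ i⟫ ≤ y i := by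
  simp [polyP]

lemma polyP_compact8 {n m : ℕ} {ξ : Fin m → EuclideanSpace ℝ (Fin n)} (i0 : Fin m)
    (hξ : ∀ i, ‖ξ i‖ = 1)
    (hhemi : ¬ ∃ v : EuclideanSpace ℝ (Fin n), ‖v‖ = 1 ∧ ∀ i, ⟪ξ i, v⟫ ≤ 0)
    (y : Fin m → ℝ) (hy : ∀ i, 0 ≤ y i) : IsCompact (polyP ξ y) := by
  have hcl : IsClosed (polyP ξ y) := by
    apply isClosed_iInter
    intro i
    exact isClosed_le (by fun_prop) continuous_const
  refine Metric.isCompact_of_isClosed_isBounded hcl ?_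
  obtain ⟨v0, hv0, hmin⟩ := (isCompact_sphere (0 : EuclideanSpace ℝ (Fin n)) 1).exists_isMinOn
    ⟨ξ i0, by simp [hξ]⟩
    (f := fun v : EuclideanSpace ℝ (Fin n) => ∑ i, max 0 ⟪ξ i, v⟫)
    (Continuous.continuousOn (by fun_prop))
  have hδ : 0 < ∑ i, max 0 ⟪ξ i, v0⟫ := by
    by_contra hle
    have h0 : ∑ i, max 0 ⟪ξ i, v0⟫ = 0 :=
      le_antisymm (not_lt.1 hle) (Finset.sum_nonneg fun i _ => le_max_left _ _)
    rw [Finset.sum_eq_zero_iff_of_nonneg (fun i _ => le_max_left _ _)] at h0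
    refine hhemi ⟨v0, by simpa using hv0, fun i => ?_⟩
    have := h0 i (Finset.mem_univ i)
    exact (le_max_right _ _).trans this.le
  set δ := ∑ i, max 0 ⟪ξ i, v0⟫ with hδd
  refine (isBounded_closedBall (x := (0 : EuclideanSpace ℝ (Fin n))) (r := (∑ i, y i) / δ)).subset ?_
  intro x hx
  rw [mem_polyP8] at hx
  rw [mem_closedBall, dist_zero_right, le_div_iff₀' hδ]
  rcases eq_or_ne x 0 with rfl | hx0
  · simpa using Finset.sum_nonneg fun i _ => hy i
  have hxn : 0 < ‖x‖ := norm_pos_iff.2 hx0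
  have h1 : δ ≤ ∑ i, max 0 ⟪ξ i, ‖x‖⁻¹ • x⟫ := hmin (a := ‖x‖⁻¹ • x) (by
    rw [mem_sphere, dist_zero_right, norm_smul, norm_inv, norm_norm, inv_mul_cancel₀ hxn.ne'])
  calc δ * ‖x‖ ≤ (∑ i, max 0 ⟪ξ i, ‖x‖⁻¹ • x⟫) * ‖x‖ := by gcongr
    _ = ∑ i, max 0 ⟪ξ i, ‖x‖⁻¹ • x⟫ * ‖x‖ := by rw [Finset.sum_mul]
    _ ≤ ∑ i, y i := by
      apply Finset.sum_le_sum
      intro i _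
      rw [← le_div_iff₀ hxn]
      apply max_le (div_nonneg (hy i) hxn.le)
      rw [inner_smul_right, ← div_eq_inv_mul, real_inner_comm]
      exact div_le_div_of_nonneg_right (hx i) hxn.le

lemma polyP_convex8 {n m : ℕ} (ξ : Fin m → EuclideanSpace ℝ (Fin n)) (y : Fin m → ℝ) :
    Convex ℝ (polyP ξ y) := by
  intro a ha b hb s t hs ht hst
  rw [mem_polyP8] at *
  intro i
  rw [inner_add_left, real_inner_smul_left, real_inner_smul_left]
  have h1 := mul_le_mul_of_nonneg_left (ha i) hs
  have h2 := mul_le_mul_of_nonneg_left (hb i) ht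
  have : s * y i + t * y i = y i := by rw [← add_mul, hst, one_mul]
  linarith

lemma analytic8 {p κ C B a : ℝ} (k : ℕ) (hp : 1 < p) (hκ : 0 < κ) (hC : 0 ≤ C) (hB : 0 < B)
    (ha : 0 ≤ a)
    (h : ∀ N : ℕ, 1 ≤ N → a * (B / N) ^ p < 1 →
      (1 - k * (a * (B / N) ^ p)) * (C + κ / N) ≤ C) : False := by
  have hlim : Tendsto (fun N : ℕ => a * B ^ p * (N : ℝ) ^ (-(p - 1))) atTop
      (nhds (a * B ^ p * 0)) :=
    ((tendsto_rpow_neg_atTop (by linarith)).comp tendsto_natCast_atTop_atTop).const_mul _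
  rw [mul_zero] at hlim
  have hlim2 := hlim.const_mul (k * (C + κ))
  rw [mul_zero] at hlim2
  obtain ⟨N, h1, h2, hN⟩ := ((hlim.eventually_lt_const one_pos).and
    ((hlim2.eventually_lt_const hκ).and (eventually_ge_atTop 1))).exists
  have hN1 : (1 : ℝ) ≤ N := by exact_mod_cast hN
  have hN0 : (0 : ℝ) < N := by linarith
  have e : a * B ^ p * (N : ℝ) ^ (-(p - 1)) = N * (a * (B / N) ^ p) := by
    rw [Real.div_rpow hB.le hN0.le, neg_sub, Real.rpow_sub hN0, Real.rpow_one]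
    ring
  rw [e] at h1 h2
  set x := a * (B / N) ^ p with hx
  have hx0 : 0 ≤ x := by positivity
  have h3 := h N hN (by nlinarith)
  have h4 : κ / N ≤ k * x * (C + κ / N) := by linarith
  have h5 : κ / N ≤ κ := div_le_self hκ.le hN1
  have h6 : κ / N ≤ k * x * (C + κ) := h4.trans (by gcongr)
  rw [div_le_iff₀ hN0] at h6
  nlinarith

end helpers

theorem stmt8 (n m : ℕ) (hn : 2 ≤ n) (p 𝔭 : ℝ) (hp : 1 < p) (h𝔭1 : 1 < 𝔭) (h𝔭n : 𝔭 < (n : ℝ))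
    (ξ : Fin m → EuclideanSpace ℝ (Fin n)) (hξ : ∀ i, ‖ξ i‖ = 1)
    (hdist : Function.Injective ξ)
    (hhemi : ¬ ∃ v : EuclideanSpace ℝ (Fin n), ‖v‖ = 1 ∧ ∀ i, ⟪ξ i, v⟫ ≤ 0)
    (c : Fin m → ℝ) (hc : ∀ i, 0 < c i)
    (yt : Fin m → ℝ) (hyt : ∀ i, 0 ≤ yt i)
    (hconstr : (𝔭 - 1) / ((n : ℝ) - 𝔭) * ∑ i, c i * yt i ^ p = 1)
    (hmax : ∀ y : Fin m → ℝ, (∀ i, 0 ≤ y i) →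
      (𝔭 - 1) / ((n : ℝ) - 𝔭) * ∑ i, c i * y i ^ p = 1 →
      pCap n 𝔭 (polyP ξ y) ≤ pCap n 𝔭 (polyP ξ yt)) :
    (0 : EuclideanSpace ℝ (Fin n)) ∈ interior (polyP ξ yt) := by
  have hF : 0 < (𝔭 - 1) / ((n : ℝ) - 𝔭) := div_pos (by linarith) (by linarith)
  by_cases hall : ∀ i, 0 < yt i
  · rw [mem_interior_iff_mem_nhds]
    have hU : IsOpen (⋂ i, {x : EuclideanSpace ℝ (Fin n) | ⟪x, ξ i⟫ < yt i}) := by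
      apply isOpen_iInter_of_finite
      intro i
      exact isOpen_lt (by fun_prop) continuous_const
    refine mem_of_superset (hU.mem_nhds ?_) ?_
    · rw [mem_iInter]
      intro i
      simpa using hall i
    · intro x hx
      rw [mem_iInter] at hx
      rw [mem_polyP8]
      exact fun i => (hx i).le
  exfalso
  push Not at hall
  obtain ⟨i0, hi0⟩ := hall
  have hi0' : yt i0 = 0 := le_antisymm hi0 (hyt i0)
  have hp0 : 0 < p := by linarith
  have hPc := polyP_compact8 i0 hξ hhemi yt hyt
  set P := polyP ξ yt with hP
  -- positivity of the maximal capacity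
  have hpos : 0 < pCap n 𝔭 P := by
    have hsum : 0 < ∑ i, c i := Finset.sum_pos (fun i _ => hc i) ⟨i0, Finset.mem_univ _⟩
    set w := (𝔭 - 1) / ((n : ℝ) - 𝔭) * ∑ i, c i with hw
    have hw0 : 0 < w := by positivity
    set s := w⁻¹ ^ (p⁻¹) with hs
    have hs0 : 0 < s := Real.rpow_pos_of_pos (inv_pos.2 hw0) _
    have hsp : s ^ p = w⁻¹ := by
      rw [hs, Real.rpow_inv_rpow (by positivity) hp0.ne']
    have hle := hmax (fun _ => s) (fun _ => hs0.le) (by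
      rw [← Finset.sum_mul, hsp, ← mul_assoc, ← hw, mul_inv_cancel₀ hw0.ne'])
    refine lt_of_lt_of_le ?_ hle
    refine pCap_pos8 h𝔭1 h𝔭n (polyP_compact8 i0 hξ hhemi _ (fun _ => hs0.le)).isBounded ?_
    refine lt_of_lt_of_le (measure_ball_pos volume (0 : EuclideanSpace ℝ (Fin n)) hs0)
      (measure_mono ?_)
    intro x hx
    rw [mem_ball, dist_zero_right] at hx
    rw [mem_polyP8]
    intro i
    have := real_inner_le_norm x (ξ i)
    rw [hξ, mul_one] at this
    linarith
  -- the new apex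
  obtain ⟨η, hηJ, hη0⟩ : ∃ η : ℝ, (∀ j, yt j ≠ 0 → η ≤ yt j) ∧ 0 < η := by
    have h1 : ∀ᶠ η : ℝ in nhdsWithin 0 (Ioi 0), ∀ j, yt j ≠ 0 → η ≤ yt j := by
      rw [eventually_all]
      intro j
      rcases eq_or_ne (yt j) 0 with h | h
      · exact Eventually.of_forall fun η hη => absurd h hη
      · have hj : 0 < yt j := lt_of_le_of_ne (hyt j) (Ne.symm h)
        filter_upwards [nhdsWithin_le_nhds (Iic_mem_nhds hj)] with η hη _
        exact hη
    exact (h1.and self_mem_nhdsWithin).exists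
  set v := η • ξ i0 with hv
  have hvi : ∀ i, ⟪v, ξ i⟫ ≤ η := by
    intro i
    have := real_inner_le_norm v (ξ i)
    rwa [hξ, mul_one, hv, norm_smul, hξ, mul_one, Real.norm_of_nonneg hη0.le] at this
  have hvP : v ∉ P := by
    intro h
    have := mem_polyP8.1 h i0
    rw [hv, real_inner_smul_left, real_inner_self_eq_norm_sq, hξ, hi0'] at this
    linarith
  have h0P : (0 : EuclideanSpace ℝ (Fin n)) ∈ P := by
    rw [hP, mem_polyP8]
    intro i
    simpa using hyt i
  obtain ⟨ε, hε0, hε1, hstrict⟩ := cone_strict8 h𝔭1 h𝔭n hPc (polyP_convex8 ξ yt) hpos ⟨0, h0P⟩ hvP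
  have hB0 : 0 < -Real.log ε := neg_pos.2 (Real.log_neg hε0 hε1)
  set W := ∑ i, c i * yt i ^ p with hW
  have hW0 : 0 < W := by
    by_contra hle
    have := mul_nonpos_of_nonneg_of_nonpos hF.le (not_lt.1 hle)
    linarith
  set D := ∑ i, (if yt i = 0 then c i else 0) with hD
  have hD0 : 0 ≤ D := Finset.sum_nonneg fun i _ => by
    split_ifs
    · exact (hc i).le
    · exact le_rfl
  have hnp : 0 < (n : ℝ) - 𝔭 := by linarith
  refine analytic8 (κ := pCap n 𝔭 (cone8 v P ε 1) - pCap n 𝔭 P) (C := pCap n 𝔭 P)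
    (B := η * -Real.log ε) (a := D / W) ⌈((n : ℝ) - 𝔭) / p⌉₊ hp (by linarith) hpos.le
    (by positivity) (by positivity) ?_
  intro N hN hx1
  have hN0 : (0 : ℝ) < N := by exact_mod_cast hN
  set t := η * -Real.log ε / N with ht
  have ht0 : 0 < t := by positivity
  set x := D / W * t ^ p with hx
  have hx0 : 0 ≤ x := by positivity
  set Q := polyP ξ (fun i => if yt i = 0 then t else yt i) with hQ
  have hQc : IsCompact Q := polyP_compact8 i0 hξ hhemi _ (fun i => by
    split_ifs
    · exact ht0.le
    · exact hyt i)
  -- the cone is contained in `Q`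
  set r := ε ^ ((N : ℝ)⁻¹) with hr
  have hr0 : 0 < r := Real.rpow_pos_of_pos hε0 _
  have hr1 : r ≤ 1 := Real.rpow_le_one hε0.le hε1.le (by positivity)
  have hrN : r ^ N = ε := Real.rpow_inv_natCast_pow hε0.le (by omega)
  have hrt : (1 - r) * η ≤ t := by
    have h1 := Real.add_one_le_exp (Real.log r)
    rw [Real.exp_log hr0, hr, Real.log_rpow hε0, ← hr] at h1
    have h2 : t = η * (-((N : ℝ)⁻¹ * Real.log ε)) := by rw [ht]; ring
    rw [h2, mul_comm]
    gcongr
    linarith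
  have hsub : cone8 v P r 1 ⊆ Q := by
    rintro z ⟨τ, hτ0, hτ1, q, hq, rfl⟩
    rw [hQ, mem_polyP8]
    intro i
    have hqi := mem_polyP8.1 hq i
    have e : ⟪v + τ • (q - v), ξ i⟫ = (1 - τ) * ⟪v, ξ i⟫ + τ * ⟪q, ξ i⟫ := by
      rw [inner_add_left, real_inner_smul_left (q - v) (ξ i) τ, inner_sub_left]; ring
    rw [e]
    have h1 := mul_le_mul_of_nonneg_left (hvi i) (sub_nonneg.2 hτ1)
    have h2 := mul_le_mul_of_nonneg_left hqi (hr0.le.trans hτ0)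
    split_ifs with h
    · rw [h] at h2
      have h3 : (1 - τ) * η ≤ (1 - r) * η := by gcongr
      linarith
    · have h3 := mul_le_mul_of_nonneg_left (hηJ i h) (sub_nonneg.2 hτ1)
      linarith
  have hQge : pCap n 𝔭 P + (pCap n 𝔭 (cone8 v P ε 1) - pCap n 𝔭 P) / N ≤ pCap n 𝔭 Q := by
    have h1 := cone_log8 (c := v) h𝔭1 h𝔭n hPc hr0 hr1 N
    rw [hrN] at h1
    have h2 := pCap_mono8 (𝔭 := 𝔭) hQc.isBounded hsub
    have h3 : (pCap n 𝔭 (cone8 v P ε 1) - pCap n 𝔭 P) / N ≤ pCap n 𝔭 (cone8 v P r 1) - pCap n 𝔭 P := by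
      rw [div_le_iff₀' hN0]; linarith
    linarith
  -- the competitor
  have hx1' : 0 < 1 - x := by linarith
  set l := (1 - x) ^ (p⁻¹) with hl
  have hl0 : 0 < l := Real.rpow_pos_of_pos hx1' _
  have hl1 : l ≤ 1 := Real.rpow_le_one hx1'.le (by linarith) (by positivity)
  have hlp : l ^ p = 1 - x := by rw [hl, Real.rpow_inv_rpow hx1'.le hp0.ne']
  set y : Fin m → ℝ := fun i => if yt i = 0 then t else l * yt i with hy
  have hy0 : ∀ i, 0 ≤ y i := fun i => by
    simp only [hy]
    split_ifs
    · exact ht0.le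
    · exact mul_nonneg hl0.le (hyt i)
  have hysum : ∑ i, c i * y i ^ p = W := by
    have h1 : ∀ i, c i * y i ^ p = (if yt i = 0 then c i else 0) * t ^ p + l ^ p * (c i * yt i ^ p) := by
      intro i
      simp only [hy]
      split_ifs with h
      · rw [h, Real.zero_rpow hp0.ne']; ring
      · rw [Real.mul_rpow hl0.le (hyt i)]; ring
    simp_rw [h1]
    rw [Finset.sum_add_distrib, ← Finset.sum_mul, ← Finset.mul_sum, ← hD, ← hW, hlp, hx]
    field_simp
    ring
  have hmx := hmax y hy0 (by rw [hysum]; exact hconstr)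
  have hmap := pCap_map8 (𝔭 := 𝔭) (E' := Q) (polyP_compact8 i0 hξ hhemi y hy0).isBounded
    (LinearIsometryEquiv.refl ℝ _) 0 l hl0 (by
      intro z hz
      rw [mem_polyP8]
      intro i
      have hzi := mem_polyP8.1 hz i
      rw [zero_add, LinearIsometryEquiv.coe_refl, id, real_inner_smul_left]
      have h1 := mul_le_mul_of_nonneg_left hzi hl0.le
      simp only [hy]
      split_ifs at h1 ⊢ with h
      · have : l * t ≤ 1 * t := by gcongr
        linarith
      · exact h1)
  have hln : 0 < l ^ ((n : ℝ) - 𝔭) := Real.rpow_pos_of_pos hl0 _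
  have e2 : l ^ (𝔭 - n) = (l ^ ((n : ℝ) - 𝔭))⁻¹ := by
    rw [← Real.rpow_neg hl0.le, neg_sub]
  rw [e2, ← div_eq_inv_mul, le_div_iff₀' hln] at hmap
  have hbern : 1 - (⌈((n : ℝ) - 𝔭) / p⌉₊ : ℝ) * x ≤ l ^ ((n : ℝ) - 𝔭) := by
    have h1 : l ^ ((n : ℝ) - 𝔭) = (1 - x) ^ (((n : ℝ) - 𝔭) / p) := by
      rw [hl, ← Real.rpow_mul hx1'.le, inv_mul_eq_div]
    have h2 : (1 - x) ^ ((⌈((n : ℝ) - 𝔭) / p⌉₊ : ℕ) : ℝ) ≤ (1 - x) ^ (((n : ℝ) - 𝔭) / p) :=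
      Real.rpow_le_rpow_of_exponent_ge hx1' (by linarith) (Nat.le_ceil _)
    rw [Real.rpow_natCast] at h2
    have h3 := one_add_mul_le_pow (a := -x) (by linarith) ⌈((n : ℝ) - 𝔭) / p⌉₊
    rw [h1]
    refine le_trans ?_ h2
    rw [sub_eq_add_neg 1 x]
    linarith
  have hκ : 0 ≤ (pCap n 𝔭 (cone8 v P ε 1) - pCap n 𝔭 P) / N := div_nonneg (by linarith) hN0.le
  calc _ ≤ l ^ ((n : ℝ) - 𝔭) * (pCap n 𝔭 P + (pCap n 𝔭 (cone8 v P ε 1) - pCap n 𝔭 P) / N) := by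
        apply mul_le_mul_of_nonneg_right hbern
        linarith
    _ ≤ l ^ ((n : ℝ) - 𝔭) * pCap n 𝔭 Q := by gcongr
    _ ≤ pCap n 𝔭 (polyP ξ y) := hmap
    _ ≤ pCap n 𝔭 P := hmx
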